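/- Let n be a positive integer divisible by 4. Then the complex dimension of the χ'-isotypic component of the diagonal coinvariant ring R_W of W(B_n) satisfies dim_ℂ (R_W)^{χ'} ≥ (n+1) + n(n-4)/4. -/

import Mathlib

open MvPolynomial

/-- The action of the signed permutation `(ε, σ) ∈ W(Bₙ)` on the polynomial ring
`ℂ[x₁,…,xₙ,y₁,…,yₙ]`, sending `xᵢ ↦ εᵢ x_{σ(i)}` and `yᵢ ↦ εᵢ y_{σ(i)}`. -/
noncomputable def bAct (n : ℕ) (ε : Fin n → ℤˣ) (σ : Equiv.Perm (Fin n)) :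
    MvPolynomial (Fin n ⊕ Fin n) ℂ →ₐ[ℂ] MvPolynomial (Fin n ⊕ Fin n) ℂ :=
  aeval (Sum.elim
    (fun i => (((ε i : ℤ) : ℂ)) • X (Sum.inl (σ i)))
    (fun i => (((ε i : ℤ) : ℂ)) • X (Sum.inr (σ i))))

/-- The ideal `I_W` generated by the `W(Bₙ)`-invariant polynomials of positive degree
(equivalently, by the invariant polynomials with zero constant term). -/
noncomputable def diagIdeal (n : ℕ) : Ideal (MvPolynomial (Fin n ⊕ Fin n) ℂ) :=
  Ideal.span {f | (∀ ε σ, bAct n ε σ f = f) ∧ constantCoeff f = 0}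

/-- The χ′-isotypic component of the diagonal coinvariant ring `R_W = R/I_W`, where
`χ'(ε,σ) = ∏ᵢ εᵢ` (trivial on permutations, `−1` on each sign change): it is the image
in `R/I_W` of those polynomials `g` with `(ε,σ)·g − χ'(ε,σ)·g ∈ I_W` for all
`(ε,σ) ∈ W(Bₙ)`. -/
noncomputable def chiIsotypic (n : ℕ) :
    Submodule ℂ (MvPolynomial (Fin n ⊕ Fin n) ℂ ⧸ diagIdeal n) :=
  (⨅ (ε : Fin n → ℤˣ) (σ : Equiv.Perm (Fin n)),
    Submodule.comap
      ((bAct n ε σ).toLinearMap - (((∏ i, ε i : ℤˣ) : ℤ) : ℂ) • LinearMap.id)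
      (Submodule.restrictScalars ℂ (diagIdeal n))).map
    (Ideal.Quotient.mkₐ ℂ (diagIdeal n)).toLinearMap

/-!
Let `Z = ∑ z_u x^u` be the generic power series in two variables. A polynomial `F` in the variables
`z_u` gives a functional on `ℂ[x₁,…,xₙ,y₁,…,yₙ]`, which sends `∏ x_i ^ a_i y_i ^ b_i` to
`(∏ ∂/∂z_{(a_i, b_i)}) F (0)`. Multiplication by the polarized power sum `p_v` is adjoint to the
derivation `z_u ↦ z_{u - v}`, the infinitesimal multiplication of `Z` by `x^v`. As `I_W` is
contained in the ideal of the `p_v` with `v ≠ 0` even, the forms of degree `n` in the odd variables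
which are killed by these derivations act on the coinvariants, and faithfully on the `χ'`-isotypic
component. They are the invariants of odd power series under multiplication by even power series
with constant coefficient `1`.

Let `Z_k` be the part of degree `k` of `Z` and `Z_1 = α x + β y`. Evaluated at the root `(-β, α)` of
`Z_1`, the forms `Z_3`, `α Z_5 - ∂Z_3/∂x · Z_3` and `β Z_5 - ∂Z_3/∂y · Z_3` are invariants of
degrees 4, 7 and 7. Together with `α` and `β` of degree 1, they have more than `⌊n ^ 2 / 4⌋`
linearly independent products of degree `n`.
-/

namespace DiagonalCoinvariant

section Derivations

section CommSemiring

variable {K σ M : Type*} [CommSemiring K]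

/-- The functional `F ↦ (∂_{d 0} ⋯ ∂_{d (n-1)} F)(0)`. -/
noncomputable def derivAtZero : (n : ℕ) → (Fin n → σ) → MvPolynomial σ K →ₗ[K] K
  | 0, _ => lcoeff K 0
  | n + 1, d => derivAtZero n (Fin.tail d) ∘ₗ (pderiv (d 0)).toLinearMap

lemma derivAtZero_zero (d : Fin 0 → σ) (F : MvPolynomial σ K) :
    derivAtZero 0 d F = constantCoeff F := rfl

lemma derivAtZero_succ {n : ℕ} (d : Fin (n + 1) → σ) (F : MvPolynomial σ K) :
    derivAtZero (n + 1) d F = derivAtZero n (Fin.tail d) (pderiv (d 0) F) := rfl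

lemma exists_derivAtZero_eq_mul_coeff {n : ℕ} (d : Fin n → σ) :
    ∃ c : ℕ, 0 < c ∧ ∀ F : MvPolynomial σ K,
      derivAtZero n d F = c * coeff (∑ i, Finsupp.single (d i) 1) F := by
  induction n with
  | zero => exact ⟨1, one_pos, fun F => by simp [derivAtZero_zero, constantCoeff_eq]⟩
  | succ n ih =>
    obtain ⟨c, hc, h⟩ := ih (Fin.tail d)
    set m : σ →₀ ℕ := ∑ i, Finsupp.single (Fin.tail d i) 1
    refine ⟨c * (m (d 0) + 1), by positivity, fun F => ?_⟩
    have hm : ∑ i, Finsupp.single (d i) 1 = m + Finsupp.single (d 0) 1 := by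
      rw [Fin.sum_univ_succ, add_comm]; rfl
    rw [derivAtZero_succ, h, coeff_pderiv, hm]
    push_cast
    ring

lemma exists_eq_sum_single {n : ℕ} {m : σ →₀ ℕ} (hm : m.degree = n) :
    ∃ d : Fin n → σ, m = ∑ i, Finsupp.single (d i) 1 := by
  subst hm
  induction m using Finsupp.induction_linear with
  | zero =>
    have : IsEmpty (Fin (0 : σ →₀ ℕ).degree) := by rw [map_zero]; infer_instance
    exact ⟨isEmptyElim, by simp⟩
  | single a b => exact ⟨fun _ => a, by simp⟩
  | add f g hf hg =>
    obtain ⟨d, hd⟩ := hf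
    obtain ⟨e, he⟩ := hg
    have hdeg : (f + g).degree = f.degree + g.degree := map_add _ f g
    refine ⟨Fin.append d e ∘ Fin.cast hdeg, ?_⟩
    rw [← Equiv.sum_comp (finCongr hdeg.symm), Fin.sum_univ_add]
    simp [← hd, ← he]

variable [LE M] [Sub M] [DecidableLE M]

/-- The derivation of `K[z_u : u ∈ M]` with `z_u ↦ z_{u - v}`, where `z_w = 0` unless `w ∈ M`.
On the coefficients of a power series `∑ z_u x^u` it is the multiplication by `x^v`. -/
noncomputable def lowering (v : M) : Derivation K (MvPolynomial M K) (MvPolynomial M K) :=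
  mkDerivation K fun u => if v ≤ u then X (u - v) else 0

lemma lowering_X (v u : M) :
    lowering v (X u : MvPolynomial M K) = if v ≤ u then X (u - v) else 0 :=
  mkDerivation_X ..

lemma constantCoeff_lowering (v : M) (F : MvPolynomial M K) :
    constantCoeff (lowering v F) = 0 := by
  induction F using MvPolynomial.induction_on with
  | C a => simp
  | add p q hp hq => simp [hp, hq]
  | mul_X p w hp => rw [Derivation.leibniz, lowering_X]; split_ifs <;> simp [hp]

/-- The algebra of constants of the derivations `lowering v`, `v ∈ S`. -/
noncomputable def loweringConstants (S : Set M) : Subalgebra K (MvPolynomial M K) where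
  carrier := {F | ∀ v ∈ S, lowering v F = 0}
  mul_mem' hF hG v hv := by simp [hF v hv, hG v hv]
  add_mem' hF hG v hv := by simp [hF v hv, hG v hv]
  algebraMap_mem' c v _ := (lowering v).map_algebraMap c

end CommSemiring

variable {K M : Type*} [CommRing K] [PartialOrder M] [Sub M] [DecidableLE M] [AddCommMonoid M]
  [CanonicallyOrderedAdd M] [IsOrderedCancelAddMonoid M] [OrderedSub M]

lemma commutator_pderiv_lowering (u v : M) :
    ⁅(pderiv u : Derivation K (MvPolynomial M K) (MvPolynomial M K)), lowering (K := K) v⁆ =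
      pderiv (u + v) := by
  classical
  refine derivation_ext fun w => ?_
  have hconst : lowering v ((Pi.single u 1 : M → MvPolynomial M K) w) = 0 := by
    obtain rfl | h := eq_or_ne w u <;> simp [*]
  rw [Derivation.commutator_apply, lowering_X, pderiv_X, pderiv_X, hconst, sub_zero]
  split_ifs with hle
  · obtain ⟨t, rfl⟩ := le_iff_exists_add'.mp hle
    simp [pderiv_X, Pi.single_apply]
  · have hne : w ≠ u + v := by rintro rfl; exact hle le_add_self
    simp [hne]

lemma derivAtZero_lowering {n : ℕ} (d : Fin n → M) (v : M) (F : MvPolynomial M K) :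
    derivAtZero n d (lowering v F) = ∑ i, derivAtZero n (d + Pi.single i v) F := by
  induction n generalizing F with
  | zero => simp [derivAtZero_zero, constantCoeff_lowering]
  | succ n ih =>
    have hcomm : pderiv (d 0) (lowering v F) =
        pderiv (d 0 + v) F + lowering v (pderiv (d 0) F) := by
      rw [← commutator_pderiv_lowering, Derivation.commutator_apply, sub_add_cancel]
    have htail (e : Fin (n + 1) → M) : Fin.tail (d + e) = Fin.tail d + Fin.tail e := rfl
    have hsingle_zero : Fin.tail (Pi.single 0 v : Fin (n + 1) → M) = 0 := by
      ext i; simp [Fin.tail]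
    have hsingle_succ (j : Fin n) :
        Fin.tail (Pi.single j.succ v : Fin (n + 1) → M) = Pi.single j v := by
      ext i; simp [Fin.tail, Pi.single_apply]
    rw [derivAtZero_succ, hcomm, map_add, ih, Fin.sum_univ_succ]
    simp [derivAtZero_succ, htail, hsingle_zero, hsingle_succ]

end Derivations

section OrbitSums

variable {ι K : Type*} [Fintype ι]

/-- Exponent vectors of the variables `x_i, y_i`, grouped into one bidegree in `ℕ × ℕ` for each
`i`. -/
noncomputable def exponentEquiv : (ι → ℕ × ℕ) ≃+ (ι ⊕ ι →₀ ℕ) where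
  toFun d := Finsupp.equivFunOnFinite.symm (Sum.elim (Prod.fst ∘ d) (Prod.snd ∘ d))
  invFun m i := (m (.inl i), m (.inr i))
  left_inv d := by ext <;> simp
  right_inv m := by ext (i | i) <;> simp
  map_add' d e := by ext (i | i) <;> simp

section CommSemiring

variable [CommSemiring K]

/-- The monomial `∏ x_i ^ (d i).1 * y_i ^ (d i).2`. -/
noncomputable def bimonomial (d : ι → ℕ × ℕ) : MvPolynomial (ι ⊕ ι) K :=
  monomial (exponentEquiv d) 1

lemma bimonomial_eq_prod (d : ι → ℕ × ℕ) : (bimonomial d : MvPolynomial (ι ⊕ ι) K) =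
    ∏ i, X (.inl i) ^ (d i).1 * X (.inr i) ^ (d i).2 := by
  rw [bimonomial, monomial_eq, Finsupp.prod_fintype _ _ (by simp), Fintype.prod_sum_type,
    Finset.prod_mul_distrib]
  simp [exponentEquiv]

lemma bimonomial_mul (d e : ι → ℕ × ℕ) :
    (bimonomial d * bimonomial e : MvPolynomial (ι ⊕ ι) K) = bimonomial (d + e) := by
  simp [bimonomial, monomial_mul]

lemma monomial_eq_smul_bimonomial (m : ι ⊕ ι →₀ ℕ) (a : K) :
    monomial m a = a • bimonomial (exponentEquiv.symm m) := by
  simp [bimonomial, smul_monomial]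

variable [DecidableEq ι]

/-- The polarized power sum `∑ x_i ^ v.1 * y_i ^ v.2`. -/
noncomputable def powerSum (v : ℕ × ℕ) : MvPolynomial (ι ⊕ ι) K :=
  ∑ i, bimonomial (Pi.single i v)

/-- The ideal generated by the polarized power sums with bidegree in `S`. -/
noncomputable def powerSumIdeal (S : Set (ℕ × ℕ)) : Ideal (MvPolynomial (ι ⊕ ι) K) :=
  Ideal.span (powerSum '' S)

/-- The sum of the permutations of a monomial, each orbit element being counted with the order of
its stabilizer. -/
noncomputable def orbitSum (d : ι → ℕ × ℕ) : MvPolynomial (ι ⊕ ι) K :=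
  ∑ σ : Equiv.Perm ι, bimonomial (d ∘ σ)

lemma orbitSum_comp_perm (d : ι → ℕ × ℕ) (τ : Equiv.Perm ι) :
    (orbitSum (d ∘ τ) : MvPolynomial (ι ⊕ ι) K) = orbitSum d :=
  Equiv.sum_comp (Equiv.mulLeft τ) fun σ => bimonomial (d ∘ σ)

lemma powerSum_mul_orbitSum (v : ℕ × ℕ) (d : ι → ℕ × ℕ) :
    (powerSum v * orbitSum d : MvPolynomial (ι ⊕ ι) K) =
      ∑ i, orbitSum (d + Pi.single i v) := by
  have hcomp (i : ι) (σ : Equiv.Perm ι) :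
      Pi.single i v + d ∘ σ = (d + (Pi.single (σ i) v : ι → ℕ × ℕ)) ∘ σ := by
    funext k
    simp [Pi.single_apply, add_comm]
  simp only [powerSum, orbitSum, Finset.sum_mul_sum, bimonomial_mul, hcomp]
  rw [Finset.sum_comm, Finset.sum_comm (s := Finset.univ (α := ι))]
  exact Finset.sum_congr rfl fun σ _ =>
    Equiv.sum_comp σ fun i => bimonomial ((d + (Pi.single i v : ι → ℕ × ℕ)) ∘ σ)

lemma orbitSum_add_single_comm {d : ι → ℕ × ℕ} {i j : ι} (hi : d i = 0) (hj : d j = 0)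
    (v : ℕ × ℕ) : (orbitSum (d + Pi.single i v) : MvPolynomial (ι ⊕ ι) K) =
      orbitSum (d + Pi.single j v) := by
  rw [← orbitSum_comp_perm (K := K) (d + (Pi.single j v : ι → ℕ × ℕ)) (Equiv.swap i j)]
  congr 1
  funext k
  obtain rfl | hki := eq_or_ne k i
  · simp [hi, hj]
  obtain rfl | hkj := eq_or_ne k j
  · simp [hi, hj, hki, hki.symm]
  · simp [Equiv.swap_apply_of_ne_of_ne hki hkj, hki, hkj]

lemma powerSum_mul_orbitSum_of_apply_eq_zero (v : ℕ × ℕ) {d : ι → ℕ × ℕ} {j : ι} (hj : d j = 0) :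
    (powerSum v * orbitSum d : MvPolynomial (ι ⊕ ι) K) =
      (Finset.univ.filter fun i => d i = 0).card • orbitSum (d + Pi.single j v) +
        ∑ i with d i ≠ 0, orbitSum (d + Pi.single i v) := by
  rw [powerSum_mul_orbitSum, ← Finset.sum_filter_add_sum_filter_not _ fun i => d i = 0,
    ← Finset.sum_const]
  exact congrArg (· + _) (Finset.sum_congr rfl fun i hi =>
    orbitSum_add_single_comm (Finset.mem_filter.mp hi).2 hj v)

end CommSemiring

variable [Field K] [CharZero K] [DecidableEq ι]

-- If `d = e + v·δ_j` with `e j = 0`, then `powerSum v * orbitSum e` is a positive multiple of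
-- `orbitSum d` plus orbit sums with fewer nonzero bidegrees.
lemma orbitSum_mem_powerSumIdeal_of_support_subset {P : AddSubmonoid (ℕ × ℕ)} (s : Finset ι) :
    ∀ d : ι → ℕ × ℕ, (∀ i ∉ s, d i = 0) → d ≠ 0 → (∀ i, d i ∈ P) →
      orbitSum d ∈ (powerSumIdeal (P \ {0}) : Ideal (MvPolynomial (ι ⊕ ι) K)) := by
  induction s using Finset.induction_on with
  | empty => exact fun d hd hne _ => (hne (funext fun i => hd i (by simp))).elim
  | insert j s _ ih =>
    intro d hd hne hP
    by_cases hj : d j = 0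
    · refine ih d (fun i hi => ?_) hne hP
      obtain rfl | hij := eq_or_ne i j
      exacts [hj, hd i (by simp [hij, hi])]
    set v := d j
    set e := Function.update d j 0
    have hej : e j = 0 := Function.update_self ..
    have hde : d = e + Pi.single j v := by
      funext k
      obtain rfl | hk := eq_or_ne k j
      exacts [by simp [e, v], by simp [e, hk]]
    have heP (k : ι) : e k ∈ P := by
      obtain rfl | hk := eq_or_ne k j
      exacts [hej ▸ zero_mem P, by simpa [e, hk] using hP k]
    have hes (k : ι) (hk : k ∉ s) : e k = 0 := by
      obtain rfl | hkj := eq_or_ne k j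
      exacts [hej, by simp [e, hkj, hd k (by simp [hkj, hk])]]
    have hlower : ∑ i with e i ≠ 0, orbitSum (e + Pi.single i v) ∈
        (powerSumIdeal (P \ {0}) : Ideal (MvPolynomial (ι ⊕ ι) K)) := by
      refine Ideal.sum_mem _ fun i hi => ih _ (fun k hk => ?_) (fun h => ?_) fun k => ?_
      · have hki : k ≠ i := by rintro rfl; simp [hes k hk] at hi
        simp [hes k hk, hki]
      · simpa [v, hj] using congrFun h i
      · obtain rfl | hk := eq_or_ne k i
        exacts [by simpa using add_mem (heP k) (hP j), by simpa [hk] using heP k]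
    have hmul : powerSum v * orbitSum e ∈
        (powerSumIdeal (P \ {0}) : Ideal (MvPolynomial (ι ⊕ ι) K)) :=
      Ideal.mul_mem_right _ _ (Ideal.subset_span ⟨v, ⟨hP j, hj⟩, rfl⟩)
    have hcard : ((Finset.univ.filter fun i => e i = 0).card : K) ≠ 0 :=
      Nat.cast_ne_zero.mpr (Finset.card_ne_zero_of_mem (a := j) (by simp [hej]))
    rw [powerSum_mul_orbitSum_of_apply_eq_zero v hej, ← hde, Ideal.add_mem_iff_left _ hlower,
      ← Nat.cast_smul_eq_nsmul K] at hmul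
    exact (Submodule.smul_mem_iff ((powerSumIdeal _).restrictScalars K) hcard).mp hmul

lemma orbitSum_mem_powerSumIdeal {P : AddSubmonoid (ℕ × ℕ)} {d : ι → ℕ × ℕ} (hd : d ≠ 0)
    (hP : ∀ i, d i ∈ P) :
    orbitSum d ∈ (powerSumIdeal (P \ {0}) : Ideal (MvPolynomial (ι ⊕ ι) K)) :=
  orbitSum_mem_powerSumIdeal_of_support_subset Finset.univ d (by simp) hd hP

end OrbitSums

section SignedPermutations

variable {n : ℕ}

/-- The bidegrees of even total degree. -/
def evenBidegrees : AddSubmonoid (ℕ × ℕ) where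
  carrier := {v | Even (v.1 + v.2)}
  zero_mem' := by simp
  add_mem' {v w} hv hw := by
    simpa [add_add_add_comm] using Even.add hv hw

lemma mem_evenBidegrees {v : ℕ × ℕ} : v ∈ evenBidegrees ↔ Even (v.1 + v.2) := Iff.rfl

lemma bAct_bimonomial (ε : Fin n → ℤˣ) (σ : Equiv.Perm (Fin n)) (d : Fin n → ℕ × ℕ) :
    bAct n ε σ (bimonomial d) =
      (∏ i, ((ε i : ℤ) : ℂ) ^ ((d i).1 + (d i).2)) • bimonomial (d ∘ ⇑σ⁻¹) := by
  have hperm : (bimonomial (d ∘ ⇑σ⁻¹) : MvPolynomial (Fin n ⊕ Fin n) ℂ) =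
      ∏ i, X (.inl (σ i)) ^ (d i).1 * X (.inr (σ i)) ^ (d i).2 := by
    rw [bimonomial_eq_prod, ← Equiv.prod_comp σ]
    simp
  rw [hperm, bimonomial_eq_prod, map_prod, ← Finset.prod_smul]
  refine Finset.prod_congr rfl fun i _ => ?_
  simp [bAct, smul_pow, pow_add, smul_smul, mul_comm]

lemma bAct_orbitSum (ε : Fin n → ℤˣ) (σ : Equiv.Perm (Fin n)) {d : Fin n → ℕ × ℕ}
    (hd : ∀ i, d i ∉ evenBidegrees) :
    bAct n ε σ (orbitSum d) = (((∏ i, ε i : ℤˣ) : ℤ) : ℂ) • orbitSum d := by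
  have hodd (e : ℤˣ) (i : Fin n) : ((e : ℤ) : ℂ) ^ ((d i).1 + (d i).2) = (e : ℤ) := by
    have := Nat.not_even_iff_odd.mp (hd i)
    obtain rfl | rfl := Int.units_eq_one_or e <;> simp [this.neg_one_pow]
  simp only [orbitSum, map_sum, bAct_bimonomial, Function.comp_apply, hodd, ← Finset.smul_sum]
  push_cast
  congr 1
  exact Equiv.sum_comp (Equiv.mulRight σ⁻¹) fun τ => bimonomial (d ∘ τ)

/-- The sum of the signed permutations, `|W(Bₙ)|` times the Reynolds operator. -/
noncomputable def groupSum (n : ℕ) :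
    MvPolynomial (Fin n ⊕ Fin n) ℂ →ₗ[ℂ] MvPolynomial (Fin n ⊕ Fin n) ℂ :=
  ∑ ε, ∑ σ, (bAct n ε σ).toLinearMap

lemma groupSum_bimonomial (d : Fin n → ℕ × ℕ) : groupSum n (bimonomial d) =
    (∏ i, ∑ e : ℤˣ, ((e : ℤ) : ℂ) ^ ((d i).1 + (d i).2)) • orbitSum d := by
  have hinv : ∑ σ : Equiv.Perm (Fin n), bimonomial (d ∘ ⇑σ⁻¹) =
      (orbitSum d : MvPolynomial (Fin n ⊕ Fin n) ℂ) :=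
    Equiv.sum_comp (Equiv.inv _) fun σ : Equiv.Perm (Fin n) => bimonomial (d ∘ σ)
  simp only [groupSum, LinearMap.sum_apply, AlgHom.toLinearMap_apply, bAct_bimonomial,
    ← Finset.smul_sum, hinv, ← Finset.sum_smul, Fintype.prod_sum]

lemma groupSum_bimonomial_mem_powerSumIdeal {d : Fin n → ℕ × ℕ} (hd : d ≠ 0) :
    groupSum n (bimonomial d) ∈ powerSumIdeal (evenBidegrees \ {0}) := by
  rw [groupSum_bimonomial]
  by_cases h : ∀ i, d i ∈ evenBidegrees
  · exact Submodule.smul_of_tower_mem _ _ (orbitSum_mem_powerSumIdeal hd h)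
  · obtain ⟨i, hi⟩ := not_forall.mp h
    have hsum : ∑ e : ℤˣ, ((e : ℤ) : ℂ) ^ ((d i).1 + (d i).2) = 0 := by
      have := Nat.not_even_iff_odd.mp hi
      simp [this.neg_one_pow]
    rw [Finset.prod_eq_zero (Finset.mem_univ i) hsum, zero_smul]
    exact zero_mem _

lemma groupSum_eq_smul {f : MvPolynomial (Fin n ⊕ Fin n) ℂ} (hf : ∀ ε σ, bAct n ε σ f = f) :
    groupSum n f = (2 ^ n * n.factorial : ℂ) • f := by
  simp [groupSum, hf, Fintype.card_perm, mul_smul, ← Nat.cast_smul_eq_nsmul ℂ]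

lemma diagIdeal_le_powerSumIdeal :
    diagIdeal n ≤ powerSumIdeal (evenBidegrees \ {0}) := by
  refine Ideal.span_le.mpr ?_
  rintro f ⟨hf, hf0⟩
  have hsum : groupSum n f ∈ powerSumIdeal (ι := Fin n) (K := ℂ) (evenBidegrees \ {0}) := by
    rw [f.as_sum, map_sum]
    refine Ideal.sum_mem _ fun m hm => ?_
    rw [monomial_eq_smul_bimonomial, map_smul]
    refine Submodule.smul_of_tower_mem _ _ (groupSum_bimonomial_mem_powerSumIdeal ?_)
    rintro h
    obtain rfl : m = 0 := by simpa using h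
    exact mem_support_iff.mp hm hf0
  rw [groupSum_eq_smul hf] at hsum
  refine (Submodule.smul_mem_iff ((powerSumIdeal _).restrictScalars ℂ) ?_).mp hsum
  exact mul_ne_zero (by simp) (by exact_mod_cast n.factorial_ne_zero)

lemma mk_orbitSum_mem_chiIsotypic {d : Fin n → ℕ × ℕ} (hd : ∀ i, d i ∉ evenBidegrees) :
    Ideal.Quotient.mkₐ ℂ (diagIdeal n) (orbitSum d) ∈ chiIsotypic n := by
  refine Submodule.mem_map_of_mem ?_
  simp [Submodule.mem_iInf, bAct_orbitSum _ _ hd]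

lemma mk_eq_mk_C_constantCoeff {f : MvPolynomial (Fin n ⊕ Fin n) ℂ}
    (hf : ∀ ε σ, bAct n ε σ f = f) :
    Ideal.Quotient.mk (diagIdeal n) f = Ideal.Quotient.mk _ (C (constantCoeff f)) := by
  refine Ideal.Quotient.eq.mpr (Ideal.subset_span ⟨fun ε σ => ?_, by simp⟩)
  rw [map_sub, hf, algHom_C, algebraMap_eq]

lemma mk_pow_eq_zero {c : Fin n → MvPolynomial (Fin n ⊕ Fin n) ℂ}
    (hc : ∀ ε σ i, bAct n ε σ (c i) = c (σ i)) (hc0 : ∀ i, constantCoeff (c i) = 0)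
    (i : Fin n) : Ideal.Quotient.mk (diagIdeal n) (c i) ^ n = 0 := by
  let g : Polynomial (MvPolynomial (Fin n ⊕ Fin n) ℂ) := ∏ j, (.X - .C (c j))
  have hinv (ε σ) : g.map (bAct n ε σ : _ →+* MvPolynomial (Fin n ⊕ Fin n) ℂ) = g := by
    simp only [g, Polynomial.map_prod, Polynomial.map_sub, Polynomial.map_X, Polynomial.map_C,
      RingHom.coe_coe, hc]
    exact Equiv.prod_comp σ fun j => Polynomial.X - Polynomial.C (c j)
  have hconst : g.map constantCoeff = .X ^ n := by
    simp [g, Polynomial.map_prod, hc0]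
  have hmk : g.map (Ideal.Quotient.mk (diagIdeal n)) = .X ^ n := by
    ext1 k
    have hinvk (ε σ) : bAct n ε σ (g.coeff k) = g.coeff k := by
      conv_rhs => rw [← hinv ε σ, Polynomial.coeff_map, RingHom.coe_coe]
    rw [Polynomial.coeff_map, mk_eq_mk_C_constantCoeff hinvk, ← Polynomial.coeff_map, hconst]
    simp only [Polynomial.coeff_X_pow]
    split_ifs <;> simp
  have hroot : (g.map (Ideal.Quotient.mk (diagIdeal n))).eval (Ideal.Quotient.mk _ (c i)) = 0 := by
    rw [Polynomial.map_prod, Polynomial.eval_prod]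
    exact Finset.prod_eq_zero (Finset.mem_univ i) (by simp)
  simpa [hmk] using hroot

lemma mk_X_sq_pow_eq_zero (j : Fin n ⊕ Fin n) :
    Ideal.Quotient.mk (diagIdeal n) (X j ^ 2) ^ n = 0 := by
  have hsq (e : ℤˣ) : ((e : ℤ) : ℂ) ^ 2 = 1 := by
    obtain rfl | rfl := Int.units_eq_one_or e <;> simp
  have hl (ε σ) (i : Fin n) : bAct n ε σ (X (.inl i) ^ 2) = X (.inl (σ i)) ^ 2 := by
    simp [bAct, smul_pow, hsq]
  have hr (ε σ) (i : Fin n) : bAct n ε σ (X (.inr i) ^ 2) = X (.inr (σ i)) ^ 2 := by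
    simp [bAct, smul_pow, hsq]
  obtain i | i := j
  exacts [mk_pow_eq_zero hl (by simp) i, mk_pow_eq_zero hr (by simp) i]

instance finite_quotient_diagIdeal :
    Module.Finite ℂ (MvPolynomial (Fin n ⊕ Fin n) ℂ ⧸ diagIdeal n) := by
  have hX (j : Fin n ⊕ Fin n) : IsIntegral ℂ (Ideal.Quotient.mkₐ ℂ (diagIdeal n) (X j)) := by
    have hn : 0 < n := j.elim Fin.pos Fin.pos
    refine IsIntegral.of_pow (n := 2 * n) (by positivity) ?_
    rw [pow_mul, ← map_pow, Ideal.Quotient.mkₐ_eq_mk, mk_X_sq_pow_eq_zero]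
    exact isIntegral_zero
  have : Algebra.IsIntegral ℂ (MvPolynomial (Fin n ⊕ Fin n) ℂ ⧸ diagIdeal n) := by
    refine ⟨fun q => ?_⟩
    obtain ⟨p, rfl⟩ := Ideal.Quotient.mkₐ_surjective ℂ (diagIdeal n) q
    induction p using MvPolynomial.induction_on with
    | C a => exact isIntegral_algebraMap (x := a)
    | add p q hp hq => rw [map_add]; exact hp.add hq
    | mul_X p j hp => rw [map_mul]; exact hp.mul (hX j)
  exact Algebra.IsIntegral.finite

end SignedPermutations

section HomogeneousPart

variable {K σ : Type*} [CommSemiring K] {A : Subalgebra K (MvPolynomial σ K)} {m n : ℕ}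
  {F G : MvPolynomial σ K}

/-- The forms of degree `n` in the subalgebra `A`. -/
noncomputable def homogeneousPart (A : Subalgebra K (MvPolynomial σ K)) (n : ℕ) :
    Submodule K (MvPolynomial σ K) :=
  Subalgebra.toSubmodule A ⊓ homogeneousSubmodule σ K n

lemma mul_mem_homogeneousPart (hF : F ∈ homogeneousPart A m) (hG : G ∈ homogeneousPart A n) :
    F * G ∈ homogeneousPart A (m + n) :=
  ⟨A.mul_mem hF.1 hG.1, IsHomogeneous.mul hF.2 hG.2⟩

lemma pow_mem_homogeneousPart (hF : F ∈ homogeneousPart A m) (a : ℕ) :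
    F ^ a ∈ homogeneousPart A (m * a) :=
  ⟨A.pow_mem hF.1 a, IsHomogeneous.pow hF.2 a⟩

end HomogeneousPart

section Duality

section DerivPairing

variable {K : Type*} [CommRing K] {n : ℕ}

/-- The pairing `⟨F, ∏ x_i ^ a_i y_i ^ b_i⟩ = (∏ ∂/∂z_{(a_i, b_i)}) F (0)` of polynomials in the
variables `z_v` with polynomials in `n` pairs of variables. -/
noncomputable def derivPairing (n : ℕ) : MvPolynomial (ℕ × ℕ) K →ₗ[K]
    Module.Dual K (MvPolynomial (Fin n ⊕ Fin n) K) :=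
  LinearMap.flip ((basisMonomials _ K).constr K fun m => derivAtZero n (exponentEquiv.symm m))

lemma derivPairing_bimonomial (F : MvPolynomial (ℕ × ℕ) K) (d : Fin n → ℕ × ℕ) :
    derivPairing n F (bimonomial d) = derivAtZero n d F := by
  have h : bimonomial d = basisMonomials (Fin n ⊕ Fin n) K (exponentEquiv d) := by
    rw [coe_basisMonomials, bimonomial]
  rw [derivPairing, LinearMap.flip_apply, h, Module.Basis.constr_basis, AddEquiv.symm_apply_apply]

lemma exists_derivPairing_orbitSum_eq_mul_coeff (d : Fin n → ℕ × ℕ) :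
    ∃ c : ℕ, 0 < c ∧ ∀ F : MvPolynomial (ℕ × ℕ) K,
      derivPairing n F (orbitSum d) = c * coeff (∑ i, Finsupp.single (d i) 1) F := by
  have hcoeff (σ : Equiv.Perm (Fin n)) := exists_derivAtZero_eq_mul_coeff (K := K) (d ∘ σ)
  choose c hc h using hcoeff
  refine ⟨∑ σ, c σ, Finset.sum_pos (fun σ _ => hc σ) Finset.univ_nonempty, fun F => ?_⟩
  simp only [orbitSum, map_sum, derivPairing_bimonomial, h, Nat.cast_sum, Finset.sum_mul]
  refine Finset.sum_congr rfl fun σ _ => ?_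
  rw [← Equiv.sum_comp σ fun i => Finsupp.single (d i) 1]
  rfl

lemma derivPairing_powerSum_mul (F : MvPolynomial (ℕ × ℕ) K) (v : ℕ × ℕ)
    (q : MvPolynomial (Fin n ⊕ Fin n) K) :
    derivPairing n F (powerSum v * q) = derivPairing n (lowering v F) q := by
  induction q using MvPolynomial.induction_on' with
  | monomial m a =>
    rw [monomial_eq_smul_bimonomial, mul_smul_comm, map_smul, map_smul, derivPairing_bimonomial,
      derivAtZero_lowering, powerSum, Finset.sum_mul, map_sum]
    simp only [bimonomial_mul, derivPairing_bimonomial, add_comm]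
  | add p q hp hq => simp only [mul_add, map_add, hp, hq]

lemma derivPairing_eq_zero_of_mem {S : Set (ℕ × ℕ)} {F : MvPolynomial (ℕ × ℕ) K}
    (hF : F ∈ loweringConstants S) {q : MvPolynomial (Fin n ⊕ Fin n) K}
    (hq : q ∈ powerSumIdeal S) : derivPairing n F q = 0 := by
  suffices h : ∀ r, derivPairing n F (q * r) = 0 by simpa using h 1
  induction hq using Submodule.span_induction with
  | mem _ hv =>
    obtain ⟨v, hv, rfl⟩ := hv
    exact fun r => by rw [derivPairing_powerSum_mul, hF v hv, map_zero, LinearMap.zero_apply]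
  | zero => simp
  | add p q _ _ hp hq => exact fun r => by rw [add_mul, map_add, hp, hq, add_zero]
  | smul a q _ hq => exact fun r => by rw [smul_eq_mul, mul_comm a, mul_assoc, hq]

end DerivPairing

variable {n : ℕ}

/-- The forms of degree `n` in the variables `z_v`, `v` odd, which are annihilated by `lowering v`
for all even `v ≠ 0`; equivalently, the invariants of the odd power series `∑ z_u x^u` under
multiplication by even power series with constant coefficient `1`. -/
noncomputable def invariantForms (n : ℕ) : Submodule ℂ (MvPolynomial (ℕ × ℕ) ℂ) :=
  homogeneousPart
    (loweringConstants (evenBidegrees \ {0}) ⊓ supported ℂ (evenBidegrees : Set (ℕ × ℕ))ᶜ) n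

/-- The functionals on the isotypic component given by `derivPairing`. -/
noncomputable def chiIsotypicPairing (n : ℕ) :
    invariantForms n →ₗ[ℂ] Module.Dual ℂ (chiIsotypic n) :=
  (chiIsotypic n).subtype.dualMap ∘ₗ
    (Submodule.Quotient.restrictScalarsEquiv ℂ (diagIdeal n)).symm.dualMap.toLinearMap ∘ₗ
    (Submodule.dualQuotEquivDualAnnihilator ((diagIdeal n).restrictScalars ℂ)).symm.toLinearMap ∘ₗ
    ((derivPairing n).domRestrict (invariantForms n)).codRestrict _ fun F =>
      (Submodule.mem_dualAnnihilator _).mpr fun _ hq =>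
        derivPairing_eq_zero_of_mem F.2.1.1 (diagIdeal_le_powerSumIdeal hq)

lemma chiIsotypicPairing_apply (F : invariantForms n) (q : MvPolynomial (Fin n ⊕ Fin n) ℂ)
    (hq : Ideal.Quotient.mkₐ ℂ (diagIdeal n) q ∈ chiIsotypic n) :
    chiIsotypicPairing n F ⟨_, hq⟩ = derivPairing n F q := rfl

lemma chiIsotypicPairing_injective : Function.Injective (chiIsotypicPairing n) := by
  rw [injective_iff_map_eq_zero]
  rintro ⟨F, ⟨hinv, hodd⟩, hdeg⟩ h
  by_contra hF
  obtain ⟨m, hm⟩ := ne_zero_iff.mp fun h => hF (Subtype.ext h)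
  have hmdeg : m.degree = n := by rw [Finsupp.degree_eq_weight_one]; exact hdeg hm
  obtain ⟨d, rfl⟩ := exists_eq_sum_single hmdeg
  have hd (i : Fin n) : d i ∉ evenBidegrees := by
    refine mem_supported.mp hodd ((mem_vars_iff_mem_support _).mpr ⟨_, mem_support_iff.mpr hm, ?_⟩)
    rw [Finsupp.mem_support_iff, Finsupp.finsetSum_apply]
    exact (Finset.sum_pos' (fun _ _ => zero_le) ⟨i, Finset.mem_univ i, by simp⟩).ne'
  obtain ⟨c, hc, hcoeff⟩ := exists_derivPairing_orbitSum_eq_mul_coeff (K := ℂ) d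
  have hzero := LinearMap.congr_fun h ⟨_, mk_orbitSum_mem_chiIsotypic hd⟩
  rw [chiIsotypicPairing_apply, hcoeff] at hzero
  exact mul_ne_zero (by exact_mod_cast hc.ne') hm hzero

lemma card_le_finrank_chiIsotypic {ι : Type*} [Fintype ι] {F : ι → MvPolynomial (ℕ × ℕ) ℂ}
    (hF : LinearIndependent ℂ F) (hmem : ∀ i, F i ∈ invariantForms n) :
    Fintype.card ι ≤ Module.finrank ℂ (chiIsotypic n) := by
  have hsub : LinearIndependent ℂ fun i => (⟨F i, hmem i⟩ : invariantForms n) :=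
    LinearIndependent.of_comp (invariantForms n).subtype hF
  rw [← Subspace.dual_finrank_eq]
  exact (hsub.map' _ (LinearMap.ker_eq_bot.mpr
    chiIsotypicPairing_injective)).fintype_card_le_finrank

end Duality

section Invariants

open Finset.HasAntidiagonal (antidiagonal mem_antidiagonal)

section Lowering

variable {K : Type*} [CommRing K]

/-- The coefficient of `x` in the generic power series `Z = ∑ z_u x^u`. -/
noncomputable def alpha : MvPolynomial (ℕ × ℕ) K := X (1, 0)

/-- The coefficient of `y` in the generic power series `Z = ∑ z_u x^u`. -/
noncomputable def beta : MvPolynomial (ℕ × ℕ) K := X (0, 1)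

/-- The value of the binary form `∑ c_u z_{u + s} x^u` of degree `k` at `(-β, α)`, the root of the
linear part of `Z`. -/
noncomputable def formAtRoot (c : ℕ × ℕ → ℕ) (s : ℕ × ℕ) (k : ℕ) : MvPolynomial (ℕ × ℕ) K :=
  ∑ u ∈ antidiagonal k, c u • (X (u + s) * ((-beta) ^ u.1 * alpha ^ u.2))

/-- `Z₃(-β, α)`, where `Z_k` is the part of degree `k` of `Z`. -/
noncomputable def cubicAtRoot : MvPolynomial (ℕ × ℕ) K := formAtRoot 1 0 3

/-- `Z₅(-β, α)`. -/
noncomputable def quinticAtRoot : MvPolynomial (ℕ × ℕ) K := formAtRoot 1 0 5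

/-- `∂Z₃/∂x (-β, α)`. -/
noncomputable def cubicDXAtRoot : MvPolynomial (ℕ × ℕ) K := formAtRoot (fun u => u.1 + 1) (1, 0) 2

/-- `∂Z₃/∂y (-β, α)`. -/
noncomputable def cubicDYAtRoot : MvPolynomial (ℕ × ℕ) K := formAtRoot (fun u => u.2 + 1) (0, 1) 2

/-- `α Z₅ - ∂Z₃/∂x · Z₃` at `(-β, α)`. -/
noncomputable def septicX : MvPolynomial (ℕ × ℕ) K :=
  alpha * quinticAtRoot - cubicDXAtRoot * cubicAtRoot

/-- `β Z₅ - ∂Z₃/∂y · Z₃` at `(-β, α)`. -/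
noncomputable def septicY : MvPolynomial (ℕ × ℕ) K :=
  beta * quinticAtRoot - cubicDYAtRoot * cubicAtRoot

/-- The value at `(-β, α)` of the quadratic part of the monomial `x^v`. -/
noncomputable def quadraticAtRoot (v : ℕ × ℕ) : MvPolynomial (ℕ × ℕ) K :=
  if v.1 + v.2 = 2 then (-beta) ^ v.1 * alpha ^ v.2 else 0

lemma lowering_alpha {v : ℕ × ℕ} (hv : 2 ≤ v.1 + v.2) :
    lowering v (alpha : MvPolynomial (ℕ × ℕ) K) = 0 := by
  have h : ¬v ≤ (1, 0) := by rw [Prod.le_def]; dsimp only; omega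
  rw [alpha, lowering_X, if_neg h]

lemma lowering_beta {v : ℕ × ℕ} (hv : 2 ≤ v.1 + v.2) :
    lowering v (beta : MvPolynomial (ℕ × ℕ) K) = 0 := by
  have h : ¬v ≤ (0, 1) := by rw [Prod.le_def]; dsimp only; omega
  rw [beta, lowering_X, if_neg h]

lemma lowering_formAtRoot {v : ℕ × ℕ} (hv : 2 ≤ v.1 + v.2) (c : ℕ × ℕ → ℕ) (s : ℕ × ℕ) (k : ℕ) :
    lowering v (formAtRoot c s k : MvPolynomial (ℕ × ℕ) K) =
      ∑ u ∈ antidiagonal k with v ≤ u + s,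
        c u • (X (u + s - v) * ((-beta) ^ u.1 * alpha ^ u.2)) := by
  rw [formAtRoot, map_sum, Finset.sum_filter]
  refine Finset.sum_congr rfl fun u _ => ?_
  have hw : lowering v ((-beta) ^ u.1 * alpha ^ u.2 : MvPolynomial (ℕ × ℕ) K) = 0 := by
    simp [Derivation.leibniz_pow, lowering_alpha hv, lowering_beta hv]
  rw [map_nsmul, Derivation.leibniz, hw, smul_zero, zero_add, lowering_X, smul_eq_mul, mul_comm]
  split_ifs <;> simp

lemma lowering_formAtRoot_of_lt {v : ℕ × ℕ} (hv : 2 ≤ v.1 + v.2) (c : ℕ × ℕ → ℕ) {s : ℕ × ℕ}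
    {k : ℕ} (hk : k + (s.1 + s.2) < v.1 + v.2) :
    lowering v (formAtRoot c s k : MvPolynomial (ℕ × ℕ) K) = 0 := by
  rw [lowering_formAtRoot hv, Finset.sum_filter]
  refine Finset.sum_eq_zero fun u hu => if_neg fun h => ?_
  rw [mem_antidiagonal] at hu
  rw [Prod.le_def, Prod.fst_add, Prod.snd_add] at h
  omega

lemma lowering_formAtRoot_one {v : ℕ × ℕ} (hv : 2 ≤ v.1 + v.2) (l : ℕ) :
    lowering v (formAtRoot 1 0 (v.1 + v.2 + l) : MvPolynomial (ℕ × ℕ) K) =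
      (-beta) ^ v.1 * alpha ^ v.2 * formAtRoot 1 0 l := by
  have hshift : (antidiagonal (v.1 + v.2 + l)).filter (v ≤ · + 0) =
      (antidiagonal l).map (addLeftEmbedding v) := by
    ext u
    simp only [Finset.mem_filter, mem_antidiagonal, Finset.mem_map, addLeftEmbedding_apply,
      add_zero]
    constructor
    · rintro ⟨hu, hle⟩
      obtain ⟨w, rfl⟩ := le_iff_exists_add.mp hle
      exact ⟨w, by simp at hu; omega, rfl⟩
    · rintro ⟨w, hw, rfl⟩
      exact ⟨by simp; omega, le_self_add⟩
  rw [lowering_formAtRoot hv, hshift, Finset.sum_map, formAtRoot, Finset.mul_sum]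
  refine Finset.sum_congr rfl fun w _ => ?_
  simp only [Pi.one_apply, one_smul, addLeftEmbedding_apply, add_zero, add_tsub_cancel_left,
    Prod.fst_add, Prod.snd_add, pow_add]
  ring

lemma formAtRoot_one_zero_one : (formAtRoot 1 0 1 : MvPolynomial (ℕ × ℕ) K) = 0 := by
  have h : antidiagonal 1 = {((0 : ℕ), (1 : ℕ)), (1, 0)} := rfl
  simp only [formAtRoot, h, alpha, beta, Finset.mem_singleton, Prod.mk.injEq, zero_ne_one,
    one_ne_zero, and_self, not_false_eq_true, Finset.sum_insert, Finset.sum_singleton,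
    Pi.one_apply, one_smul, add_zero, pow_zero, pow_one]
  ring

lemma two_le_of_mem_evenBidegrees {v : ℕ × ℕ} (hv : v ∈ (evenBidegrees \ {0} : Set (ℕ × ℕ))) :
    2 ≤ v.1 + v.2 := by
  obtain ⟨⟨k, hk⟩, hv0⟩ := hv
  have hk0 : k ≠ 0 := by
    rintro rfl
    exact hv0 (Prod.ext (by simp; omega) (by simp; omega))
  omega

variable {v : ℕ × ℕ}

lemma lowering_cubicAtRoot (hv : v ∈ (evenBidegrees \ {0} : Set (ℕ × ℕ))) :
    lowering v (cubicAtRoot : MvPolynomial (ℕ × ℕ) K) = 0 := by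
  have h2 := two_le_of_mem_evenBidegrees hv
  obtain h | h : v.1 + v.2 = 2 ∨ 4 ≤ v.1 + v.2 := by
    obtain ⟨k, hk⟩ := mem_evenBidegrees.mp hv.1
    omega
  · rw [cubicAtRoot, show 3 = v.1 + v.2 + 1 by omega, lowering_formAtRoot_one h2,
      formAtRoot_one_zero_one, mul_zero]
  · exact lowering_formAtRoot_of_lt h2 _ (by simp; omega)

lemma lowering_quinticAtRoot (hv : v ∈ (evenBidegrees \ {0} : Set (ℕ × ℕ))) :
    lowering v (quinticAtRoot : MvPolynomial (ℕ × ℕ) K) = quadraticAtRoot v * cubicAtRoot := by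
  have h2 := two_le_of_mem_evenBidegrees hv
  obtain h | h | h : v.1 + v.2 = 2 ∨ v.1 + v.2 = 4 ∨ 6 ≤ v.1 + v.2 := by
    obtain ⟨k, hk⟩ := mem_evenBidegrees.mp hv.1
    omega
  · rw [quinticAtRoot, show 5 = v.1 + v.2 + 3 by omega, lowering_formAtRoot_one h2,
      quadraticAtRoot, if_pos h, cubicAtRoot]
  · rw [quinticAtRoot, show 5 = v.1 + v.2 + 1 by omega, lowering_formAtRoot_one h2,
      formAtRoot_one_zero_one, quadraticAtRoot, if_neg (by omega), mul_zero, zero_mul]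
  · rw [quinticAtRoot, lowering_formAtRoot_of_lt h2 _ (by simp; omega),
      quadraticAtRoot, if_neg (by omega), zero_mul]

lemma lowering_cubicDXAtRoot (hv : v ∈ (evenBidegrees \ {0} : Set (ℕ × ℕ))) :
    lowering v (cubicDXAtRoot : MvPolynomial (ℕ × ℕ) K) = quadraticAtRoot v * alpha := by
  have h2 := two_le_of_mem_evenBidegrees hv
  obtain h | h : v ∈ antidiagonal 2 ∨ 4 ≤ v.1 + v.2 := by
    obtain ⟨k, hk⟩ := mem_evenBidegrees.mp hv.1
    rw [mem_antidiagonal]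
    omega
  · have hanti : antidiagonal 2 = {((0 : ℕ), (2 : ℕ)), (1, 1), (2, 0)} := rfl
    rw [hanti] at h
    rw [cubicDXAtRoot, lowering_formAtRoot h2, hanti, Finset.sum_filter]
    simp only [Finset.mem_insert, Finset.mem_singleton] at h
    obtain rfl | rfl | rfl := h <;> simp [quadraticAtRoot, alpha, beta] <;> ring
  · rw [cubicDXAtRoot, lowering_formAtRoot_of_lt h2 _ (by simp; omega), quadraticAtRoot,
      if_neg (by omega), zero_mul]

lemma lowering_cubicDYAtRoot (hv : v ∈ (evenBidegrees \ {0} : Set (ℕ × ℕ))) :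
    lowering v (cubicDYAtRoot : MvPolynomial (ℕ × ℕ) K) = quadraticAtRoot v * beta := by
  have h2 := two_le_of_mem_evenBidegrees hv
  obtain h | h : v ∈ antidiagonal 2 ∨ 4 ≤ v.1 + v.2 := by
    obtain ⟨k, hk⟩ := mem_evenBidegrees.mp hv.1
    rw [mem_antidiagonal]
    omega
  · have hanti : antidiagonal 2 = {((0 : ℕ), (2 : ℕ)), (1, 1), (2, 0)} := rfl
    rw [hanti] at h
    rw [cubicDYAtRoot, lowering_formAtRoot h2, hanti, Finset.sum_filter]
    simp only [Finset.mem_insert, Finset.mem_singleton] at h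
    obtain rfl | rfl | rfl := h <;> simp [quadraticAtRoot, alpha, beta] <;> ring
  · rw [cubicDYAtRoot, lowering_formAtRoot_of_lt h2 _ (by simp; omega), quadraticAtRoot,
      if_neg (by omega), zero_mul]

lemma lowering_septicX (hv : v ∈ (evenBidegrees \ {0} : Set (ℕ × ℕ))) :
    lowering v (septicX : MvPolynomial (ℕ × ℕ) K) = 0 := by
  simp only [septicX, map_sub, Derivation.leibniz, lowering_cubicAtRoot hv,
    lowering_quinticAtRoot hv, lowering_cubicDXAtRoot hv,
    lowering_alpha (two_le_of_mem_evenBidegrees hv), smul_eq_mul]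
  ring

lemma lowering_septicY (hv : v ∈ (evenBidegrees \ {0} : Set (ℕ × ℕ))) :
    lowering v (septicY : MvPolynomial (ℕ × ℕ) K) = 0 := by
  simp only [septicY, map_sub, Derivation.leibniz, lowering_cubicAtRoot hv,
    lowering_quinticAtRoot hv, lowering_cubicDYAtRoot hv,
    lowering_beta (two_le_of_mem_evenBidegrees hv), smul_eq_mul]
  ring

end Lowering

section Membership

/-- The forms of degree `n` in the variables `z_v`, `v` odd. -/
noncomputable def oddForms (n : ℕ) : Submodule ℂ (MvPolynomial (ℕ × ℕ) ℂ) :=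
  homogeneousPart (supported ℂ (evenBidegrees : Set (ℕ × ℕ))ᶜ) n

lemma X_mem_oddForms {v : ℕ × ℕ} (hv : v ∉ evenBidegrees) :
    (X v : MvPolynomial (ℕ × ℕ) ℂ) ∈ oddForms 1 :=
  ⟨Algebra.subset_adjoin ⟨v, hv, rfl⟩, isHomogeneous_X _ _⟩

lemma alpha_mem_oddForms : alpha ∈ oddForms 1 := X_mem_oddForms (by simp [mem_evenBidegrees])

lemma beta_mem_oddForms : beta ∈ oddForms 1 := X_mem_oddForms (by simp [mem_evenBidegrees])

lemma formAtRoot_mem_oddForms (c : ℕ × ℕ → ℕ) {s : ℕ × ℕ} {k : ℕ} (hk : Odd (k + (s.1 + s.2))) :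
    formAtRoot c s k ∈ oddForms (1 + k) := by
  refine sum_mem fun u hu => nsmul_mem (mul_mem_homogeneousPart (X_mem_oddForms ?_) ?_) _
  · rw [mem_antidiagonal] at hu
    rw [mem_evenBidegrees, Nat.not_even_iff_odd]
    convert hk using 1
    simp only [Prod.fst_add, Prod.snd_add]
    omega
  · have h := mul_mem_homogeneousPart (pow_mem_homogeneousPart (neg_mem beta_mem_oddForms) u.1)
      (pow_mem_homogeneousPart alpha_mem_oddForms u.2)
    rwa [one_mul, one_mul, mem_antidiagonal.mp hu] at h

lemma mem_invariantForms {n : ℕ} {F : MvPolynomial (ℕ × ℕ) ℂ} (hF : F ∈ oddForms n)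
    (h : ∀ v ∈ (evenBidegrees \ {0} : Set (ℕ × ℕ)), lowering v F = 0) : F ∈ invariantForms n :=
  ⟨⟨h, hF.1⟩, hF.2⟩

lemma alpha_mem_invariantForms : alpha ∈ invariantForms 1 :=
  mem_invariantForms alpha_mem_oddForms fun _ hv => lowering_alpha (two_le_of_mem_evenBidegrees hv)

lemma beta_mem_invariantForms : beta ∈ invariantForms 1 :=
  mem_invariantForms beta_mem_oddForms fun _ hv => lowering_beta (two_le_of_mem_evenBidegrees hv)

lemma cubicAtRoot_mem_invariantForms : cubicAtRoot ∈ invariantForms 4 :=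
  mem_invariantForms (formAtRoot_mem_oddForms 1 (by decide)) fun _ => lowering_cubicAtRoot

lemma septicX_mem_invariantForms : septicX ∈ invariantForms 7 := by
  refine mem_invariantForms (sub_mem ?_ ?_) fun _ => lowering_septicX
  · exact mul_mem_homogeneousPart alpha_mem_oddForms (formAtRoot_mem_oddForms 1 (by decide))
  · exact mul_mem_homogeneousPart (formAtRoot_mem_oddForms _ (by decide))
      (formAtRoot_mem_oddForms 1 (by decide))

lemma septicY_mem_invariantForms : septicY ∈ invariantForms 7 := by
  refine mem_invariantForms (sub_mem ?_ ?_) fun _ => lowering_septicY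
  · exact mul_mem_homogeneousPart beta_mem_oddForms (formAtRoot_mem_oddForms 1 (by decide))
  · exact mul_mem_homogeneousPart (formAtRoot_mem_oddForms _ (by decide))
      (formAtRoot_mem_oddForms 1 (by decide))

end Membership

end Invariants

section LinearIndependence

open Finset.HasAntidiagonal (antidiagonal mem_antidiagonal)

variable {K : Type*} [CommRing K]

/-- Substitution of `0` for all variables except `z_{10}`, `z_{01}`, `z_{03}` and `z_{05}`, which
become the variables `0`, `1`, `2` and `3`. -/
noncomputable def slice : MvPolynomial (ℕ × ℕ) K →ₐ[K] MvPolynomial (Fin 4) K :=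
  aeval fun v => if v = (1, 0) then X 0 else if v = (0, 1) then X 1 else
    if v = (0, 3) then X 2 else if v = (0, 5) then X 3 else 0

lemma slice_X (v : ℕ × ℕ) : slice (X v : MvPolynomial (ℕ × ℕ) K) =
    if v = (1, 0) then X 0 else if v = (0, 1) then X 1 else
      if v = (0, 3) then X 2 else if v = (0, 5) then X 3 else 0 :=
  aeval_X ..

lemma slice_alpha : slice (alpha : MvPolynomial (ℕ × ℕ) K) = X 0 := by
  simp [alpha, slice_X]

lemma slice_beta : slice (beta : MvPolynomial (ℕ × ℕ) K) = X 1 := by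
  simp [beta, slice_X]

lemma slice_cubicAtRoot : slice (cubicAtRoot : MvPolynomial (ℕ × ℕ) K) = X 0 ^ 3 * X 2 := by
  have h : antidiagonal 3 = {((0 : ℕ), (3 : ℕ)), (1, 2), (2, 1), (3, 0)} := rfl
  simp [cubicAtRoot, formAtRoot, h, slice_alpha, slice_X, mul_comm]

lemma slice_quinticAtRoot : slice (quinticAtRoot : MvPolynomial (ℕ × ℕ) K) = X 0 ^ 5 * X 3 := by
  have h : antidiagonal 5 = {((0 : ℕ), (5 : ℕ)), (1, 4), (2, 3), (3, 2), (4, 1), (5, 0)} := rfl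
  simp [quinticAtRoot, formAtRoot, h, slice_alpha, slice_X, mul_comm]

lemma slice_septicX : slice (septicX : MvPolynomial (ℕ × ℕ) K) = X 0 ^ 6 * X 3 := by
  have h : antidiagonal 2 = {((0 : ℕ), (2 : ℕ)), (1, 1), (2, 0)} := rfl
  have hdx : slice (cubicDXAtRoot : MvPolynomial (ℕ × ℕ) K) = 0 := by
    simp [cubicDXAtRoot, formAtRoot, h, slice_X]
  rw [septicX, map_sub, map_mul, map_mul, hdx, slice_alpha, slice_quinticAtRoot]
  ring

lemma slice_septicY : slice (septicY : MvPolynomial (ℕ × ℕ) K) =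
    X 0 ^ 5 * X 1 * X 3 - 3 * X 0 ^ 5 * X 2 ^ 2 := by
  have h : antidiagonal 2 = {((0 : ℕ), (2 : ℕ)), (1, 1), (2, 0)} := rfl
  have hdy : slice (cubicDYAtRoot : MvPolynomial (ℕ × ℕ) K) = 3 * X 0 ^ 2 * X 2 := by
    simp [cubicDYAtRoot, formAtRoot, h, slice_alpha, slice_X, map_ofNat]
    ring
  rw [septicY, map_sub, map_mul, map_mul, hdy, slice_beta, slice_quinticAtRoot, slice_cubicAtRoot]
  ring

/-- The index set of `invariantFamily`: the powers of `cubicAtRoot`, `alpha`, `beta` in the three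
types of products. -/
abbrev InvariantIndex : Type :=
  (Σ _ : ℕ, ℕ × ℕ) ⊕ (Σ _ : ℕ, ℕ × ℕ) ⊕ (Σ _ : ℕ, ℕ)

/-- The products of `cubicAtRoot`, `alpha`, `beta` with at most one `septicX`, or, in the absence of
`alpha`, one `septicY`. -/
noncomputable def invariantFamily : InvariantIndex → MvPolynomial (ℕ × ℕ) K
  | .inl ⟨a, p, q⟩ => cubicAtRoot ^ a * (alpha ^ p * beta ^ q)
  | .inr (.inl ⟨a, p, q⟩) => septicX * (cubicAtRoot ^ a * (alpha ^ p * beta ^ q))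
  | .inr (.inr ⟨a, q⟩) => septicY * (cubicAtRoot ^ a * beta ^ q)

/-- The exponent of a monomial which occurs in the slice of only one member of
`invariantFamily`. -/
noncomputable def sliceExponent : InvariantIndex → Fin 4 →₀ ℕ
  | .inl ⟨a, p, q⟩ => Finsupp.equivFunOnFinite.symm ![p + 3 * a, q, a, 0]
  | .inr (.inl ⟨a, p, q⟩) => Finsupp.equivFunOnFinite.symm ![p + 3 * a + 6, q, a, 1]
  | .inr (.inr ⟨a, q⟩) => Finsupp.equivFunOnFinite.symm ![3 * a + 5, q + 1, a, 1]

lemma monomial_fin_four (m : Fin 4 → ℕ) :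
    (monomial (Finsupp.equivFunOnFinite.symm m) 1 : MvPolynomial (Fin 4) K) =
      X 0 ^ m 0 * X 1 ^ m 1 * X 2 ^ m 2 * X 3 ^ m 3 := by
  rw [monomial_eq, Finsupp.prod_fintype _ _ (by simp), Fin.prod_univ_four]
  simp

lemma slice_invariantFamily_inl (a p q : ℕ) :
    slice (invariantFamily (.inl ⟨a, p, q⟩) : MvPolynomial (ℕ × ℕ) K) =
      monomial (sliceExponent (.inl ⟨a, p, q⟩)) 1 := by
  simp only [invariantFamily, sliceExponent, monomial_fin_four, slice_cubicAtRoot, slice_alpha,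
    slice_beta, map_mul, map_pow, Matrix.cons_val]
  ring

lemma slice_invariantFamily_inr_inl (a p q : ℕ) :
    slice (invariantFamily (.inr (.inl ⟨a, p, q⟩)) : MvPolynomial (ℕ × ℕ) K) =
      monomial (sliceExponent (.inr (.inl ⟨a, p, q⟩))) 1 := by
  simp only [invariantFamily, sliceExponent, monomial_fin_four, slice_septicX, slice_cubicAtRoot,
    slice_alpha, slice_beta, map_mul, map_pow, Matrix.cons_val]
  ring

lemma slice_invariantFamily_inr_inr (a q : ℕ) :
    slice (invariantFamily (.inr (.inr ⟨a, q⟩)) : MvPolynomial (ℕ × ℕ) K) =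
      monomial (sliceExponent (.inr (.inr ⟨a, q⟩))) 1 -
        (3 : K) • monomial (Finsupp.equivFunOnFinite.symm ![3 * a + 5, q, a + 2, 0]) 1 := by
  simp only [invariantFamily, sliceExponent, monomial_fin_four, slice_septicY, slice_cubicAtRoot,
    slice_beta, map_mul, map_pow, Matrix.cons_val, smul_eq_C_mul, map_ofNat]
  ring

lemma sliceExponent_injective : Function.Injective sliceExponent := by
  rintro (⟨a, p, q⟩ | ⟨a, p, q⟩ | ⟨a, q⟩) (⟨a', p', q'⟩ | ⟨a', p', q'⟩ | ⟨a', q'⟩) h <;>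
    simp only [sliceExponent, EmbeddingLike.apply_eq_iff_eq, Matrix.vecCons_inj, Sum.inl.injEq,
      Sum.inr.injEq, Sigma.mk.injEq, Prod.mk.injEq, heq_eq_eq, and_true, and_false,
      reduceCtorEq] at h ⊢ <;>
    omega

lemma sliceExponent_ne (i : InvariantIndex) (a q : ℕ) :
    sliceExponent i ≠ Finsupp.equivFunOnFinite.symm ![3 * a + 5, q, a + 2, 0] := by
  obtain ⟨a', p', q'⟩ | ⟨a', p', q'⟩ | ⟨a', q'⟩ := i <;>
    simp only [sliceExponent, ne_eq, EmbeddingLike.apply_eq_iff_eq, Matrix.vecCons_inj] <;>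
    omega

lemma coeff_slice_invariantFamily (i j : InvariantIndex) :
    coeff (sliceExponent i) (slice (invariantFamily j : MvPolynomial (ℕ × ℕ) K)) =
      if i = j then 1 else 0 := by
  have hinj : sliceExponent j = sliceExponent i ↔ i = j :=
    ⟨fun h => sliceExponent_injective h.symm, fun h => h ▸ rfl⟩
  obtain ⟨a, p, q⟩ | ⟨a, p, q⟩ | ⟨a, q⟩ := j
  · simp only [slice_invariantFamily_inl, coeff_monomial, hinj]
  · simp only [slice_invariantFamily_inr_inl, coeff_monomial, hinj]
  · rw [slice_invariantFamily_inr_inr, coeff_sub, coeff_smul, coeff_monomial, coeff_monomial,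
      if_neg (sliceExponent_ne i a q).symm, smul_zero, sub_zero]
    simp only [hinj]

lemma linearIndependent_invariantFamily :
    LinearIndependent K (invariantFamily : InvariantIndex → MvPolynomial (ℕ × ℕ) K) :=
  .of_pairwise_dual_eq_zero_one _ (fun i => lcoeff K (sliceExponent i) ∘ₗ slice.toLinearMap)
    (fun i j hij => by simp [coeff_slice_invariantFamily, hij])
    (fun i => by simp [coeff_slice_invariantFamily])

end LinearIndependence

section Counting

open Finset.HasAntidiagonal (antidiagonal mem_antidiagonal)

variable {n : ℕ}

/-- The indices of the members of degree `n` of `invariantFamily`. -/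
def invariantIndices (n : ℕ) : Finset InvariantIndex :=
  ((Finset.range (n / 4 + 1)).sigma fun a => antidiagonal (n - 4 * a)).disjSum
    (((Finset.range ((n - 3) / 4)).sigma fun a => antidiagonal (n - 7 - 4 * a)).disjSum
      ((Finset.range ((n - 3) / 4)).sigma fun a => {n - 7 - 4 * a}))

lemma invariantFamily_mem_invariantForms {i : InvariantIndex} (hi : i ∈ invariantIndices n) :
    invariantFamily i ∈ invariantForms n := by
  have hcubic (a : ℕ) := pow_mem_homogeneousPart cubicAtRoot_mem_invariantForms a
  have halpha (p : ℕ) := pow_mem_homogeneousPart alpha_mem_invariantForms p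
  have hbeta (q : ℕ) := pow_mem_homogeneousPart beta_mem_invariantForms q
  have hprod (a p q : ℕ) := mul_mem_homogeneousPart (hcubic a)
    (mul_mem_homogeneousPart (halpha p) (hbeta q))
  obtain ⟨a, p, q⟩ | ⟨a, p, q⟩ | ⟨a, q⟩ := i <;>
    simp only [invariantIndices, Finset.inl_mem_disjSum, Finset.inr_mem_disjSum, Finset.mem_sigma,
      Finset.mem_range, Finset.mem_singleton, mem_antidiagonal] at hi
  · rw [show n = 4 * a + (1 * p + 1 * q) by omega]
    exact hprod a p q
  · rw [show n = 7 + (4 * a + (1 * p + 1 * q)) by omega]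
    exact mul_mem_homogeneousPart septicX_mem_invariantForms (hprod a p q)
  · rw [show n = 7 + (4 * a + 1 * q) by omega]
    exact mul_mem_homogeneousPart septicY_mem_invariantForms
      (mul_mem_homogeneousPart (hcubic a) (hbeta q))

lemma card_invariantIndices (n : ℕ) : (invariantIndices n).card =
    ∑ a ∈ Finset.range (n / 4 + 1), (n - 4 * a + 1) +
      (∑ a ∈ Finset.range ((n - 3) / 4), (n - 7 - 4 * a + 1) + (n - 3) / 4) := by
  simp only [invariantIndices, Finset.card_disjSum, Finset.card_sigma,
    Finset.Nat.card_antidiagonal, Finset.card_singleton, Finset.sum_const, Finset.card_range,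
    smul_eq_mul, mul_one]

lemma card_invariantIndices_add_four (hn : 3 ≤ n) :
    (invariantIndices (n + 4)).card = (invariantIndices n).card + (2 * n + 4) := by
  have h1 (a : ℕ) : n + 4 - 4 * (a + 1) = n - 4 * a := by omega
  have h2 (a : ℕ) : n + 4 - 7 - 4 * (a + 1) = n - 7 - 4 * a := by omega
  simp only [card_invariantIndices, show (n + 4) / 4 = n / 4 + 1 by omega,
    show (n + 4 - 3) / 4 = (n - 3) / 4 + 1 by omega, Finset.sum_range_succ' _ (n / 4 + 1),
    Finset.sum_range_succ' _ ((n - 3) / 4), h1, h2]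
  omega

lemma sq_div_four_lt_card_invariantIndices (n : ℕ) : n ^ 2 / 4 < (invariantIndices n).card := by
  induction n using Nat.strong_induction_on with
  | _ n ih =>
    obtain hn | hn := lt_or_ge n 7
    · interval_cases n <;> decide
    · obtain ⟨m, rfl⟩ := Nat.exists_eq_add_of_le' (show 4 ≤ n by omega)
      have hsq : (m + 4) ^ 2 = m ^ 2 + (2 * m + 4) * 4 := by ring
      rw [card_invariantIndices_add_four (by omega), hsq, Nat.add_mul_div_right _ _ four_pos]
      exact Nat.add_lt_add_right (ih m (by omega)) _

end Counting

theorem sq_div_four_lt_finrank_chiIsotypic (n : ℕ) :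
    n ^ 2 / 4 < Module.finrank ℂ (chiIsotypic n) := by
  have hindep : LinearIndependent ℂ fun i : invariantIndices n => invariantFamily i.1 :=
    linearIndependent_invariantFamily.comp _ Subtype.val_injective
  calc n ^ 2 / 4 < (invariantIndices n).card := sq_div_four_lt_card_invariantIndices n
    _ = Fintype.card (invariantIndices n) := (Fintype.card_coe _).symm
    _ ≤ Module.finrank ℂ (chiIsotypic n) :=
      card_le_finrank_chiIsotypic hindep fun i => invariantFamily_mem_invariantForms i.2

end DiagonalCoinvariant

theorem dim_chi_isotypic_ge_of_four_dvd_general (n : ℕ) :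
    ((n : ℤ) + 1) + (n : ℤ) * ((n : ℤ) - 4) / 4 ≤
      (Module.finrank ℂ (chiIsotypic n) : ℤ) := by
  have h : ((n ^ 2 / 4 : ℕ) : ℤ) < Module.finrank ℂ (chiIsotypic n) := by
    exact_mod_cast DiagonalCoinvariant.sq_div_four_lt_finrank_chiIsotypic n
  have hdiv : (n : ℤ) * (n - 4) / 4 = (n ^ 2 / 4 : ℕ) - n := by
    rw [show (n : ℤ) * (n - 4) = n ^ 2 + -n * 4 by ring, Int.add_mul_ediv_right _ _ four_ne_zero]
    push_cast
    ring
  omega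

/-- If `n` is a positive integer divisible by 4, then the χ′-isotypic component of the
diagonal coinvariant ring of `W(Bₙ)` satisfies `dim_ℂ (R_W)^{χ'} ≥ (n+1) + n(n-4)/4`. -/
theorem dim_chi_isotypic_ge_of_four_dvd (n : ℕ) (hn : 0 < n) (h4 : 4 ∣ n) :
    ((n : ℤ) + 1) + (n : ℤ) * ((n : ℤ) - 4) / 4 ≤
      (Module.finrank ℂ (chiIsotypic n) : ℤ) :=
  dim_chi_isotypic_ge_of_four_dvd_general n
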